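/- Let 𝔛 ⊂ ℝ^d be a compact set and let (X_t)_{t∈𝔛} be a real-valued stochastic process on a probability space (Ω, F, P) such that: (i) the process is centered Gaussian, i.e., for every finite collection t_1, …, t_m ∈ 𝔛 and reals c_1, …, c_m, the random variable Σ_{i=1}^m c_i X_{t_i} has a centered Gaussian distribution N(0, v) for some v ≥ 0; (ii) for P-almost every ω the sample path t ↦ X_t(ω) is continuous on 𝔛; (iii) there is a constant C such that E(X_s − X_t)² ≤ C‖s − t‖² for all s, t ∈ 𝔛, where ‖·‖ is the Euclidean norm; (iv) σ² := sup_{t∈𝔛} E(X_t²) satisfies 0 < σ² < ∞. Then there exist constants K and c > 0 such that for all M > 0, P(sup_{t∈𝔛} |X_t| > M) ≤ K e^{−cM²/σ²}. -/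

import Mathlib

open MeasureTheory ProbabilityTheory

/-- Uniform Fernique tail bound for finite-dimensional centered Gaussian vectors. -/
lemma fernique_fin_tail {Ω : Type*} [MeasurableSpace Ω] (P : Measure Ω) [IsProbabilityMeasure P]
    (n : ℕ) (Y : Fin n → Ω → ℝ)
    (hm : ∀ i, AEMeasurable (Y i) P)
    (hgauss : ∀ c : Fin n → ℝ, ∃ v : NNReal,
      Measure.map (fun ω => ∑ i, c i * Y i ω) P = gaussianReal 0 v)
    (a : ℝ) (ha : 0 < a) (c : ENNReal) (hc_gt : 2⁻¹ < c) (hc_lt : c < 1)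
    (hc : c ≤ P {ω | ‖fun i => Y i ω‖ ≤ a}) (M : ℝ) (hM : 0 < M) :
    P {ω | M < ‖fun i => Y i ω‖} ≤
      (ENNReal.ofReal (Real.exp (Fernique.logRatio c))
        + ∑' n : ℕ, ENNReal.ofReal (Real.exp (-2⁻¹ * Real.log (c / (1 - c)).toReal * 2 ^ n)))
      * ENNReal.ofReal (Real.exp (-(Fernique.logRatio c * a⁻¹ ^ 2 * M ^ 2))) := by
  have hY : AEMeasurable (fun ω i => Y i ω) P := aemeasurable_pi_lambda _ hm
  set μ : Measure (Fin n → ℝ) := P.map (fun ω i => Y i ω) with hμ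
  have hL : ∀ L : StrongDual ℝ (Fin n → ℝ), ∃ v : NNReal, μ.map L = gaussianReal 0 v := by
    intro L
    obtain ⟨v, hv⟩ := hgauss (fun i => L (Pi.single i 1))
    refine ⟨v, ?_⟩
    rw [← hv, hμ, AEMeasurable.map_map_of_aemeasurable (by fun_prop) hY]
    congr 1
    ext ω
    simp only [Function.comp_apply]
    conv_lhs => rw [pi_eq_sum_univ' (fun i => Y i ω)]
    rw [map_sum]
    refine Finset.sum_congr rfl fun i _ => ?_
    rw [map_smul, smul_eq_mul, mul_comm]
  have hG : IsGaussian μ := isGaussian_of_map_eq_gaussianReal fun L => ⟨0, hL L⟩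
  have h0 : ∀ L : StrongDual ℝ (Fin n → ℝ), μ[L] = 0 := by
    intro L
    obtain ⟨v, hv⟩ := hL L
    have : ∫ x, id x ∂(μ.map L) = ∫ x, L x ∂μ := by
      rw [integral_map (by fun_prop) (by fun_prop)]; rfl
    rw [← this, hv]
    exact integral_id_gaussianReal
  have hrot := IsGaussian.map_rotation_eq_self_of_forall_strongDual_eq_zero h0 (-(Real.pi / 4))
  have hc' : c ≤ μ {x | ‖x‖ ≤ a} := by
    rw [hμ, Measure.map_apply_of_aemeasurable hY
      (measurableSet_le (by fun_prop) (by fun_prop))]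
    exact hc
  have key := lintegral_exp_mul_sq_norm_le_of_map_rotation_eq_self hrot hc' hc_gt
  set B := (ENNReal.ofReal (Real.exp (Fernique.logRatio c))
        + ∑' n : ℕ, ENNReal.ofReal (Real.exp (-2⁻¹ * Real.log (c / (1 - c)).toReal * 2 ^ n)))
  have hl := Fernique.logRatio_pos hc_gt hc_lt
  have e1 : P {ω | M < ‖fun i => Y i ω‖} = μ {x | M < ‖x‖} := by
    rw [hμ, Measure.map_apply_of_aemeasurable hY
      (measurableSet_lt (by fun_prop) (by fun_prop))]
    rfl
  rw [e1]
  set b := Fernique.logRatio c * a⁻¹ ^ 2 with hb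
  have hbpos : 0 < b := by positivity
  have mk := mul_meas_ge_le_lintegral (μ := μ)
    (f := fun x => ENNReal.ofReal (Real.exp (b * ‖x‖ ^ 2))) (by fun_prop)
    (ENNReal.ofReal (Real.exp (b * M ^ 2)))
  have hsub : μ {x | M < ‖x‖} ≤ μ {x | ENNReal.ofReal (Real.exp (b * M ^ 2)) ≤
      ENNReal.ofReal (Real.exp (b * ‖x‖ ^ 2))} := by
    refine measure_mono fun x hx => ?_
    have hx : M < ‖x‖ := hx
    refine ENNReal.ofReal_le_ofReal (Real.exp_le_exp.2 ?_)
    gcongr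
  rw [Real.exp_neg, ENNReal.ofReal_inv_of_pos (Real.exp_pos _), ← div_eq_mul_inv,
    ENNReal.le_div_iff_mul_le (by left; simp [Real.exp_pos]) (by left; simp), mul_comm]
  calc _ ≤ _ := by gcongr
    _ ≤ _ := mk
    _ ≤ _ := key

lemma fernique_const_lt_top (c : ENNReal) (hc_gt : 2⁻¹ < c) (hc_lt : c < 1) :
    (ENNReal.ofReal (Real.exp (Fernique.logRatio c))
        + ∑' n : ℕ, ENNReal.ofReal (Real.exp (-2⁻¹ * Real.log (c / (1 - c)).toReal * 2 ^ n))) < ⊤ := by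
  refine ENNReal.add_lt_top.mpr ⟨ENNReal.ofReal_lt_top, ?_⟩
  refine Summable.tsum_ofReal_lt_top <|
    Real.summable_exp_nat_mul_of_ge ?_ (fun i ↦ mod_cast (Nat.lt_pow_self (by simp)).le)
  refine mul_neg_of_neg_of_pos (by simp) ?_
  have h := Fernique.logRatio_pos hc_gt hc_lt
  unfold Fernique.logRatio at h
  rw [ENNReal.toReal_div]
  exact (div_pos_iff_of_pos_right (by positivity)).1 h

/-- The exponential tail bound (4.1) of Theorem 5: a centered Gaussian process on a
compact subset of ℝ^d with continuous sample paths, whose increments satisfy a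
Lipschitz-type variance bound, has Gaussian-type tails for its supremum. -/
theorem gaussian_process_sup_tail_bound
    {d : ℕ} {Ω : Type*} [MeasurableSpace Ω] (P : Measure Ω) [IsProbabilityMeasure P]
    (𝔛 : Set (EuclideanSpace ℝ (Fin d))) (hcomp : IsCompact 𝔛) [Nonempty 𝔛]
    (X : 𝔛 → Ω → ℝ)
    (hgauss : ∀ (m : ℕ) (t : Fin m → 𝔛) (c : Fin m → ℝ), ∃ v : NNReal,
      Measure.map (fun ω => ∑ i, c i * X (t i) ω) P = gaussianReal 0 v)
    (hcont : ∀ᵐ ω ∂P, Continuous (fun t : 𝔛 => X t ω))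
    (C : ℝ)
    (hlip : ∀ s t : 𝔛, ∫ ω, (X s ω - X t ω) ^ 2 ∂P ≤
      C * ‖(s : EuclideanSpace ℝ (Fin d)) - (t : EuclideanSpace ℝ (Fin d))‖ ^ 2)
    (σ2 : ℝ) (hσ2 : σ2 = ⨆ t : 𝔛, ∫ ω, (X t ω) ^ 2 ∂P) (hσpos : 0 < σ2) :
    ∃ K c : ℝ, 0 < c ∧ ∀ M > (0 : ℝ),
      P {ω | M < ⨆ t : 𝔛, |X t ω|} ≤ ENNReal.ofReal (K * Real.exp (-(c * M ^ 2) / σ2)) := by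
  have : CompactSpace 𝔛 := isCompact_iff_compactSpace.1 hcomp
  have hm : ∀ t, AEMeasurable (X t) P := by
    intro t
    obtain ⟨v, hv⟩ := hgauss 1 (fun _ => t) (fun _ => 1)
    simp only [Finset.univ_unique, one_mul, Finset.sum_const, Finset.card_singleton,
      one_smul] at hv
    refine AEMeasurable.of_map_ne_zero (f := X t) ?_
    rw [hv]
    exact NeZero.ne _
  have hbdd : ∀ ω, Continuous (fun t : 𝔛 => X t ω) →
      BddAbove (Set.range fun t : 𝔛 => |X t ω|) := fun ω h =>
    (isCompact_range (continuous_abs.comp h)).bddAbove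
  let u : ℕ → 𝔛 := TopologicalSpace.denseSeq 𝔛
  have hu : DenseRange u := TopologicalSpace.denseRange_denseSeq 𝔛
  let T : ℕ → Set Ω := fun k => {ω | ∀ i, |X (u i) ω| ≤ k}
  have hTmono : Monotone T := by
    intro k l hkl ω hω i
    exact (hω i).trans (by exact_mod_cast hkl)
  have hTU : P (⋃ k, T k) = 1 := by
    have : (⋃ k, T k) =ᵐ[P] Set.univ := by
      rw [Filter.eventuallyEq_univ]
      filter_upwards [hcont] with ω hω
      obtain ⟨b, hb⟩ := hbdd ω hω
      obtain ⟨k, hk⟩ := exists_nat_ge b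
      exact Set.mem_iUnion.2 ⟨k, fun i => (hb ⟨u i, rfl⟩).trans hk⟩
    rw [measure_congr this, measure_univ]
  obtain ⟨c, hc_gt, hc_lt⟩ : ∃ c : ENNReal, 2⁻¹ < c ∧ c < 1 :=
    exists_between (by simp)
  obtain ⟨k, hk1, hk⟩ : ∃ k : ℕ, 1 ≤ k ∧ c < P (T k) := by
    have ht := tendsto_measure_iUnion_atTop (μ := P) hTmono
    rw [hTU] at ht
    obtain ⟨k, h1, h2⟩ := ((Filter.eventually_ge_atTop 1).and
      (ht.eventually (lt_mem_nhds hc_lt))).exists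
    exact ⟨k, h1, h2⟩
  have hkpos : (0 : ℝ) < k := by exact_mod_cast hk1
  have hl := Fernique.logRatio_pos hc_gt hc_lt
  have hB := fernique_const_lt_top c hc_gt hc_lt
  have key : ∀ (n : ℕ) (M : ℝ), 0 < M → _ := fun n M hM =>
    fernique_fin_tail P n (fun i => X (u i)) (fun i => hm _)
      (fun c => hgauss n (fun i => u i) c) k hkpos c hc_gt hc_lt
      (hk.le.trans (measure_mono fun ω hω => by
        exact (pi_norm_le_iff_of_nonneg hkpos.le).2 fun i => hω i)) M hM
  set B := (ENNReal.ofReal (Real.exp (Fernique.logRatio c))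
        + ∑' n : ℕ, ENNReal.ofReal (Real.exp (-2⁻¹ * Real.log (c / (1 - c)).toReal * 2 ^ n)))
  refine ⟨B.toReal, Fernique.logRatio c * (k : ℝ)⁻¹ ^ 2 * σ2, by positivity, fun M hM => ?_⟩
  rw [ENNReal.ofReal_mul ENNReal.toReal_nonneg, ENNReal.ofReal_toReal hB.ne]
  have e : -(Fernique.logRatio c * (k : ℝ)⁻¹ ^ 2 * σ2 * M ^ 2) / σ2 =
      -(Fernique.logRatio c * (k : ℝ)⁻¹ ^ 2 * M ^ 2) := by field_simp
  rw [e]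
  let S : ℕ → Set Ω := fun n => {ω | M < ‖fun i : Fin n => X (u i) ω‖}
  have hSmono : Monotone S := by
    intro n m hnm ω hω
    refine lt_of_lt_of_le (show M < _ from hω) ?_
    refine (pi_norm_le_iff_of_nonneg (norm_nonneg _)).2 fun i => ?_
    exact norm_le_pi_norm (fun i : Fin m => X (u i) ω) (Fin.castLE hnm i)
  calc P {ω | M < ⨆ t : 𝔛, |X t ω|} ≤ P (⋃ n, S n) := by
        refine measure_mono_ae ?_
        filter_upwards [hcont] with ω hω hlt
        have hlt : M < ⨆ t : 𝔛, |X t ω| := hlt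
        obtain ⟨t, ht⟩ := exists_lt_of_lt_ciSup hlt
        have hopen : IsOpen {t : 𝔛 | M < |X t ω|} :=
          isOpen_lt continuous_const (continuous_abs.comp hω)
        obtain ⟨i, hi⟩ := hu.exists_mem_open hopen ⟨t, ht⟩
        refine Set.mem_iUnion.2 ⟨i + 1, ?_⟩
        exact lt_of_lt_of_le hi
          (norm_le_pi_norm (fun j : Fin (i+1) => X (u j) ω) (Fin.last i))
    _ = ⨆ n, P (S n) := hSmono.measure_iUnion
    _ ≤ _ := iSup_le fun n => key n M hM
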